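/- Let n ≥ 1, α > 0, q ∈ (1,∞), q̄(·) ∈ P^emb_q(ℝ^n), and let p : [0,∞) → [1,∞) be measurable with 1 < p⁻ ≤ p⁺ < ∞. Then there exists a constant C > 0, independent of T and u₀, such that for all T > 0 and all u₀ ∈ L^{q̄(·)}(ℝ^n): ‖(t,x) ↦ (𝔤_t^α ∗ u₀)(x)‖_{E_T} ≤ C · max{T^{1/p⁻}, T^{1/p⁺}} · ‖u₀‖_{L^{q̄(·)}(ℝ^n)}. -/

import Mathlib

open MeasureTheory Set
open scoped ENNReal FourierTransform

noncomputable section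

/-- Euclidean space `ℝ^n`. -/
abbrev Rn (n : ℕ) := EuclideanSpace ℝ (Fin n)

/-- Luxemburg norm of an `ℝ≥0∞`-valued function for a variable exponent `p`. -/
def luxNorm {Ω : Type*} [MeasurableSpace Ω] (μ : Measure Ω) (p : Ω → ℝ) (f : Ω → ℝ≥0∞) : ℝ≥0∞ :=
  sInf {lam : ℝ≥0∞ | 0 < lam ∧ ∫⁻ x, (f x / lam) ^ (p x) ∂μ ≤ 1}

/-- Luxemburg norm `‖f‖_{L^{p(·)}}` of a real-valued function. -/
def luxNormR {Ω : Type*} [MeasurableSpace Ω] (μ : Measure Ω) (p : Ω → ℝ) (f : Ω → ℝ) : ℝ≥0∞ :=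
  luxNorm μ p (fun x => ENNReal.ofReal |f x|)

/-- `p(·) ∈ P^log(Ω)`: measurable, with values in `[1,∞)` on `Ω`, locally log-Hölder
continuous on `Ω`, and satisfying the log-Hölder decay condition on `Ω`. -/
def IsPLog {E : Type*} [NormedAddCommGroup E] [MeasurableSpace E] (Ω : Set E) (p : E → ℝ) : Prop :=
  Measurable p ∧ (∀ x ∈ Ω, 1 ≤ p x) ∧
  ∃ C₁ > (0:ℝ), ∃ C₂ > (0:ℝ), ∃ pinf : ℝ,
    (∀ x ∈ Ω, ∀ y ∈ Ω, x ≠ y →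
      |1 / p x - 1 / p y| ≤ C₁ / Real.log (Real.exp 1 + 1 / ‖x - y‖)) ∧
    (∀ x ∈ Ω, |1 / p x - 1 / pinf| ≤ C₂ / Real.log (Real.exp 1 + ‖x‖))

/-- The fractional heat kernel `𝔤_t^α` on `ℝ^n`: the inverse Fourier transform of
`ξ ↦ exp (-t‖ξ‖^{2α})` (it is real-valued; we take the real part). -/
def gKer (n : ℕ) (α t : ℝ) (x : Rn n) : ℝ :=
  (𝓕⁻ (fun ξ : Rn n => (Real.exp (-t * ‖ξ‖ ^ (2 * α)) : ℂ)) x).re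

/-- Convolution on `ℝ^n`. -/
def conv (n : ℕ) (g f : Rn n → ℝ) (x : Rn n) : ℝ := ∫ y, g (x - y) * f y

/-- The class `P^emb_q(ℝ^n)` of variable exponents whose Lebesgue space embeds in `L^q`. -/
def IsPembq (n : ℕ) (q : ℝ) (qb : Rn n → ℝ) : Prop :=
  IsPLog univ qb ∧ q ≤ essInf qb volume ∧
  (∃ M : ℝ, ∀ᵐ x ∂(volume : Measure (Rn n)), qb x ≤ M) ∧
  Filter.Tendsto (fun x : Rn n => q * qb x / (qb x - q)) (Filter.cocompact (Rn n)) Filter.atTop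

/-- The Luxemburg-type norm of `E_T = L^{p(·)}([0,T], L^q(ℝ^n))`:
`‖u‖_{E_T} = inf {λ > 0 : ∫_0^T (‖u(t,·)‖_{L^q}/λ)^{p(t)} dt ≤ 1}`. -/
def eNormT (n : ℕ) (p : ℝ → ℝ) (q T : ℝ) (u : ℝ → Rn n → ℝ) : ℝ≥0∞ :=
  sInf {lam : ℝ≥0∞ | 0 < lam ∧
    ∫⁻ t in Ioc (0:ℝ) T, (eLpNorm (u t) (ENNReal.ofReal q) volume / lam) ^ (p t) ≤ 1}

/-!
Dilating the frequency variable changes an inverse Fourier transform without changing its `L¹`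
norm, so the kernels `𝔤_t^α` all have the `L¹` norm of `𝔤_1^α`. This norm is finite because
`exp (-‖ξ‖^{2α})` is a superposition `∫₀^∞ P(u) e^{-u} B_k(u^{-1/(2α)} ξ) du`, with `P` a
polynomial, of dilates of the Bochner–Riesz multiplier `B_k(ξ) = (1 - ‖ξ‖²)₊^k`; for large `k` the
latter is smooth enough to have an integrable inverse transform. Young's inequality bounds
`‖𝔤_t^α ∗ u₀‖_{L^q}` by `‖u₀‖_{L^q}`, uniformly in `t`.

The weight `w(x) = (e + ‖x‖)^{-(d+1)}`, with `d` the dimension, is integrable, and the logarithmic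
decay of `1/q - 1/q̄` keeps `w^{q/q̄ - 1}` bounded; the pointwise Young-type bound
`v^q ≤ w^{q/q̄ - 1} (v^{q̄} + w)` therefore embeds `L^{q̄(·)}` into `L^q`. Finally, the Luxemburg
norm on `(0, T]` of a constant is at most that constant times `max (T^{1/p⁻}) (T^{1/p⁺})`.
-/

section FourierInverse

theorem lintegral_comp_smul {E : Type*} [NormedAddCommGroup E] [NormedSpace ℝ E]
    [FiniteDimensional ℝ E] [MeasurableSpace E] [BorelSpace E] (μ : Measure E)
    [μ.IsAddHaarMeasure] (g : E → ℝ≥0∞) {c : ℝ} (hc : c ≠ 0) :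
    ∫⁻ x, g (c • x) ∂μ = ENNReal.ofReal |(c ^ Module.finrank ℝ E)⁻¹| * ∫⁻ x, g x ∂μ := by
  rw [← smul_eq_mul, ← lintegral_smul_measure, ← Measure.map_addHaar_smul μ hc]
  exact (lintegral_map_equiv g (MeasurableEquiv.smul₀ c hc)).symm

variable {E F : Type*} [NormedAddCommGroup E] [InnerProductSpace ℝ E] [FiniteDimensional ℝ E]
  [MeasurableSpace E] [BorelSpace E] [NormedAddCommGroup F] [NormedSpace ℂ F]

theorem fourierInv_comp_smul (f : E → F) {c : ℝ} (hc : c ≠ 0) (x : E) :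
    𝓕⁻ (fun ξ => f (c • ξ)) x = |(c ^ Module.finrank ℝ E)⁻¹| • 𝓕⁻ f (c⁻¹ • x) := by
  rw [Real.fourierInv_eq, Real.fourierInv_eq,
    ← Measure.integral_comp_smul volume (fun ξ => Real.fourierChar (inner ℝ ξ (c⁻¹ • x)) • f ξ) c]
  congr! 3 with ξ
  rw [inner_smul_left, inner_smul_right, conj_trivial, mul_inv_cancel_left₀ hc]

theorem lintegral_enorm_fourierInv_comp_smul (f : E → F) {c : ℝ} (hc : c ≠ 0) :
    ∫⁻ x, ‖𝓕⁻ (fun ξ => f (c • ξ)) x‖ₑ = ∫⁻ x, ‖𝓕⁻ f x‖ₑ := by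
  simp only [fourierInv_comp_smul f hc, enorm_smul]
  rw [lintegral_const_mul' _ _ enorm_ne_top,
    lintegral_comp_smul volume (‖𝓕⁻ f ·‖ₑ) (inv_ne_zero hc), ← mul_assoc,
    Real.enorm_eq_ofReal (abs_nonneg _), ← ENNReal.ofReal_mul (abs_nonneg _), ← abs_mul, inv_pow,
    inv_inv, inv_mul_cancel₀ (pow_ne_zero _ hc), abs_one, ENNReal.ofReal_one, one_mul]

variable {S : Type*} [MeasurableSpace S] {f : S → E → F}

theorem stronglyMeasurable_fourierInv_uncurry (hf : StronglyMeasurable (Function.uncurry f)) :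
    StronglyMeasurable (fun z : S × E => 𝓕⁻ (f z.1) z.2) := by
  simp only [Real.fourierInv_eq']
  have hchar : Measurable fun z : (S × E) × E =>
    Complex.exp (↑(2 * Real.pi * inner ℝ z.2 z.1.2) * Complex.I) := by fun_prop
  exact (hchar.stronglyMeasurable.smul
    (hf.comp_measurable (measurable_fst.fst.prodMk measurable_snd))).integral_prod_right

theorem stronglyMeasurable_fourierInv {f : E → F} (hf : StronglyMeasurable f) :
    StronglyMeasurable fun x => 𝓕⁻ f x := by
  have h : StronglyMeasurable fun z : Unit × E => 𝓕⁻ f z.2 :=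
    stronglyMeasurable_fourierInv_uncurry (f := fun _ => f) (hf.comp_measurable measurable_snd)
  exact h.comp_measurable (g := fun x : E => ((), x)) measurable_prodMk_left

variable {μ : Measure S} [SFinite μ]

theorem fourierInv_integral (hf : Integrable (Function.uncurry f) (μ.prod volume)) (x : E) :
    𝓕⁻ (fun ξ => ∫ s, f s ξ ∂μ) x = ∫ s, 𝓕⁻ (f s) x ∂μ := by
  have hchar : Measurable fun z : E × S =>
    Complex.exp (↑(2 * Real.pi * inner ℝ z.1 x) * Complex.I) := by fun_prop
  simp only [Real.fourierInv_eq', ← integral_smul]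
  exact integral_integral_swap (hf.swap.bdd_smul 1 hchar.aestronglyMeasurable
    (.of_forall fun z => (Complex.norm_exp_ofReal_mul_I _).le))

theorem lintegral_enorm_fourierInv_integral_le (hf : StronglyMeasurable (Function.uncurry f))
    (hfi : Integrable (Function.uncurry f) (μ.prod volume)) :
    ∫⁻ x, ‖𝓕⁻ (fun ξ => ∫ s, f s ξ ∂μ) x‖ₑ ≤ ∫⁻ s, (∫⁻ x, ‖𝓕⁻ (f s) x‖ₑ) ∂μ := by
  calc ∫⁻ x, ‖𝓕⁻ (fun ξ => ∫ s, f s ξ ∂μ) x‖ₑ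
      ≤ ∫⁻ x, ∫⁻ s, ‖𝓕⁻ (f s) x‖ₑ ∂μ := lintegral_mono fun x => by
        rw [fourierInv_integral hfi]
        exact enorm_integral_le_lintegral_enorm _
    _ = ∫⁻ s, (∫⁻ x, ‖𝓕⁻ (f s) x‖ₑ) ∂μ :=
        (lintegral_lintegral_swap
          (stronglyMeasurable_fourierInv_uncurry hf).enorm.aemeasurable).symm

theorem integrable_fourierInv_of_contDiff {f : E → F}
    (hf : ContDiff ℝ (volume : Measure E).integrablePower f) (hsupp : HasCompactSupport f) :
    Integrable (𝓕⁻ f) := by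
  set N := (volume : Measure E).integrablePower
  have hint (k n : ℕ) (_ : k ≤ (0 : ℕ∞)) (hn : n ≤ (N : ℕ∞)) :
      Integrable fun ξ => ‖ξ‖ ^ k * ‖iteratedFDeriv ℝ n f ξ‖ := by
    have hcont := hf.continuous_iteratedFDeriv (m := n) (by exact_mod_cast hn)
    exact (by fun_prop : Continuous _).integrable_of_hasCompactSupport
      (hsupp.iteratedFDeriv n).norm.mul_left
  have hdecay (n : ℕ) (hn : n ≤ N) : ∃ C, ∀ ξ, ‖ξ‖ ^ n * ‖𝓕 f ξ‖ ≤ C := by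
    have h := fun ξ => Real.pow_mul_norm_iteratedFDeriv_fourier_le (K := 0) (N := N) hf hint
      (k := 0) (n := n) le_rfl (by exact_mod_cast hn) ξ
    simp only [norm_iteratedFDeriv_zero] at h
    exact ⟨_, h⟩
  obtain ⟨C₀, hC₀⟩ := hdecay 0 N.zero_le
  obtain ⟨C₁, hC₁⟩ := hdecay N le_rfl
  have hcont : Continuous (𝓕 f) := VectorFourier.fourierIntegral_continuous
    Real.continuous_fourierChar continuous_inner
    (hf.continuous.integrable_of_hasCompactSupport hsupp)
  have hfourier : Integrable (𝓕 f) := by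
    refine (integrable_norm_iff hcont.aestronglyMeasurable).1 ?_
    simpa using integrable_of_le_of_pow_mul_le (μ := volume) (k := 0) (by simpa using hC₀)
      (by simpa using hC₁) hcont.aestronglyMeasurable
  simpa only [funext (Real.fourierInv_eq_fourier_neg f)] using hfourier.comp_neg

end FourierInverse

section BochnerRiesz

theorem hasDerivAt_max_zero_pow (k : ℕ) (t : ℝ) :
    HasDerivAt (fun t : ℝ => max 0 t ^ (k + 2)) ((k + 2) * max 0 t ^ (k + 1)) t := by
  rcases lt_trichotomy t 0 with ht | rfl | ht
  · rw [max_eq_left ht.le, zero_pow k.succ_ne_zero, mul_zero]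
    refine (hasDerivAt_const t (0 : ℝ)).congr_of_eventuallyEq ?_
    filter_upwards [gt_mem_nhds ht] with s hs
    rw [max_eq_left hs.le, zero_pow (k + 1).succ_ne_zero]
  · have hfactor (s : ℝ) : max 0 s ^ (k + 2) = s * max 0 s ^ (k + 1) := by
      rcases le_total s 0 with hs | hs
      · simp [max_eq_left hs]
      · rw [max_eq_right hs, pow_succ']
    have hlim : Filter.Tendsto (fun s : ℝ => max 0 s ^ (k + 1)) (nhds 0) (nhds 0) :=
      (by fun_prop : Continuous fun s : ℝ => max 0 s ^ (k + 1)).tendsto' 0 0 (by simp)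
    rw [hasDerivAt_iff_tendsto_slope]
    simp only [max_self, zero_pow k.succ_ne_zero, mul_zero]
    refine (hlim.mono_left nhdsWithin_le_nhds).congr' ?_
    filter_upwards [self_mem_nhdsWithin] with s hs
    rw [slope_def_field, hfactor s, hfactor 0, zero_mul, sub_zero, sub_zero,
      mul_div_cancel_left₀ _ hs]
  · rw [max_eq_right ht.le]
    have hpow : HasDerivAt (fun s : ℝ => s ^ (k + 2)) ((k + 2) * t ^ (k + 1)) t := by
      simpa using hasDerivAt_pow (k + 2) t
    refine hpow.congr_of_eventuallyEq ?_
    filter_upwards [lt_mem_nhds ht] with s hs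
    rw [max_eq_right hs.le]

theorem contDiff_max_zero_pow (m : ℕ) : ContDiff ℝ m (fun t : ℝ => max 0 t ^ (m + 1)) := by
  induction m with
  | zero => exact contDiff_zero.2 (by fun_prop)
  | succ m ih =>
    push_cast
    refine contDiff_succ_iff_deriv.2
      ⟨fun t => (hasDerivAt_max_zero_pow m t).differentiableAt, by simp, ?_⟩
    rw [funext fun t => (hasDerivAt_max_zero_pow m t).deriv]
    exact contDiff_const.mul ih

variable {E : Type*} [NormedAddCommGroup E]

/-- The Bochner–Riesz multiplier `(1 - ‖ξ‖²)₊^k`, supported in the unit ball and of class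
`C^(k-1)`; it is complex-valued, as a symbol for the Fourier transform. -/
def bochnerRiesz (E : Type*) [NormedAddCommGroup E] (k : ℕ) (ξ : E) : ℂ :=
  ((max 0 (1 - ‖ξ‖ ^ 2) ^ k : ℝ) : ℂ)

theorem contDiff_bochnerRiesz [InnerProductSpace ℝ E] (m : ℕ) :
    ContDiff ℝ m (bochnerRiesz E (m + 1)) :=
  Complex.ofRealCLM.contDiff.comp
    ((contDiff_max_zero_pow m).comp (contDiff_const.sub (contDiff_norm_sq ℝ)))

theorem hasCompactSupport_bochnerRiesz [ProperSpace E] {k : ℕ} (hk : k ≠ 0) :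
    HasCompactSupport (bochnerRiesz E k) := by
  refine .intro (isCompact_closedBall 0 1) fun ξ hξ => ?_
  rw [mem_closedBall_zero_iff, not_le] at hξ
  have : 1 - ‖ξ‖ ^ 2 ≤ 0 := sub_nonpos.2 (one_le_pow₀ hξ.le)
  simp [bochnerRiesz, max_eq_left this, hk]

end BochnerRiesz

section ExponentialMixture

open Polynomial

theorem integrableOn_rpow_mul_eval_mul_exp_neg {a : ℝ} (ha : 0 ≤ a) (P : ℝ[X]) :
    IntegrableOn (fun u => u ^ a * (P.eval u * Real.exp (-u))) (Ioi 0) := by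
  induction P using Polynomial.induction_on' with
  | add P Q hP hQ =>
    simp only [eval_add, add_mul, mul_add]
    exact hP.add hQ
  | monomial j c =>
    have hgamma := (Real.GammaIntegral_convergent (s := a + j + 1) (by positivity)).const_mul c
    refine IntegrableOn.congr_fun hgamma (fun u (hu : 0 < u) => ?_) measurableSet_Ioi
    simp only [eval_monomial, add_sub_cancel_right, Real.rpow_add hu, Real.rpow_natCast]
    ring

theorem integrableOn_eval_mul_exp_neg (P : ℝ[X]) :
    IntegrableOn (fun u => P.eval u * Real.exp (-u)) (Ioi 0) := by
  simpa using integrableOn_rpow_mul_eval_mul_exp_neg le_rfl P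

variable {γ r : ℝ}

theorem div_rpow_mem_Icc (hγ : 0 ≤ γ) (hr : 0 ≤ r) {u : ℝ} (hu : r < u) :
    (r / u) ^ γ ∈ Icc (0 : ℝ) 1 := by
  have hu0 : 0 < u := hr.trans_lt hu
  exact ⟨by positivity, Real.rpow_le_one (by positivity) ((div_le_one hu0).2 hu.le) hγ⟩

theorem integrableOn_one_sub_div_rpow_pow_mul (hγ : 0 ≤ γ) (hr : 0 ≤ r) (k : ℕ) (P : ℝ[X]) :
    IntegrableOn (fun u => (1 - (r / u) ^ γ) ^ k * (P.eval u * Real.exp (-u))) (Ioi r) := by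
  refine ((integrableOn_eval_mul_exp_neg P).mono_set (Ioi_subset_Ioi hr)).bdd_mul (c := 1) ?_ ?_
  · exact (by fun_prop : Measurable fun u => (1 - (r / u) ^ γ) ^ k).aestronglyMeasurable
  · filter_upwards [ae_restrict_mem measurableSet_Ioi] with u hu
    obtain ⟨h0, h1⟩ := div_rpow_mem_Icc hγ hr hu
    rw [norm_pow, Real.norm_of_nonneg (by linarith)]
    exact pow_le_one₀ (by linarith) (by linarith)

theorem hasDerivAt_one_sub_div_rpow_pow (hγ : 0 < γ) (hr : 0 ≤ r) {u : ℝ} (hu : 0 < u) (k : ℕ) :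
    HasDerivAt (fun u => (1 - (r / u) ^ γ) ^ (k + 1))
      ((k + 1) * γ * ((1 - (r / u) ^ γ) ^ k * (r / u) ^ γ) / u) u := by
  rcases hr.eq_or_lt with rfl | hr
  · simpa [Real.zero_rpow hγ.ne'] using hasDerivAt_const u (1 : ℝ)
  have hx : HasDerivAt (fun u => (r / u) ^ γ) (-(γ * (r / u) ^ γ / u)) u := by
    have hdiv : HasDerivAt (fun u => r / u) (-(r / u ^ 2)) u := by
      simpa [neg_div] using (hasDerivAt_const u r).fun_div (hasDerivAt_id' u) hu.ne'
    refine (hdiv.rpow_const (p := γ) (.inl (by positivity))).congr_deriv ?_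
    rw [Real.rpow_sub_one (by positivity)]
    field_simp
  refine ((hx.const_sub 1).fun_pow (k + 1)).congr_deriv ?_
  rw [Nat.add_sub_cancel]
  push_cast
  ring

theorem hasDerivAt_mul_eval_mul_exp_neg (P : ℝ[X]) (u : ℝ) :
    HasDerivAt (fun u => u * (P.eval u * Real.exp (-u)))
      ((derivative (X * P) - X * P).eval u * Real.exp (-u)) u := by
  have h := ((X * P).hasDerivAt u).fun_mul (hasDerivAt_neg u).exp
  simp only [eval_mul, eval_X, mul_assoc] at h
  refine h.congr_deriv ?_
  simp only [eval_sub, eval_mul, eval_X]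
  ring

theorem continuousAt_one_sub_div_rpow_pow_mul (hγ : 0 < γ) (hr : 0 ≤ r) (k : ℕ) (P : ℝ[X]) :
    ContinuousAt (fun u => (1 - (r / u) ^ γ) ^ k * (u * (P.eval u * Real.exp (-u)))) r := by
  rcases hr.eq_or_lt with rfl | hr
  · simp only [zero_div, Real.zero_rpow hγ.ne', sub_zero, one_pow, one_mul]
    exact (hasDerivAt_mul_eval_mul_exp_neg P 0).continuousAt
  · have hdiv : ContinuousAt (fun u => r / u) r := continuousAt_const.div continuousAt_id hr.ne'
    exact ((continuousAt_const.sub (hdiv.rpow_const (.inr hγ.le))).pow k).mul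
      (hasDerivAt_mul_eval_mul_exp_neg P r).continuousAt

theorem tendsto_one_sub_div_rpow_pow_mul (hγ : 0 < γ) (r : ℝ) (k : ℕ) (P : ℝ[X]) :
    Filter.Tendsto (fun u => (1 - (r / u) ^ γ) ^ k * (u * (P.eval u * Real.exp (-u))))
      Filter.atTop (nhds 0) := by
  have hdiv : Filter.Tendsto (fun u : ℝ => (r / u) ^ γ) Filter.atTop (nhds 0) := by
    simpa [Real.zero_rpow hγ.ne'] using
      (Filter.tendsto_id.const_div_atTop r).rpow_const (p := γ) (.inr hγ.le)
  have hexp : Filter.Tendsto (fun u : ℝ => u * (P.eval u * Real.exp (-u)))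
      Filter.atTop (nhds 0) :=
    (tendsto_div_exp_atTop (X * P)).congr fun u => by
      rw [eval_mul, eval_X, Real.exp_neg, div_eq_mul_inv, mul_assoc]
  simpa using ((hdiv.const_sub 1).pow k).mul hexp

theorem integral_one_sub_div_rpow_pow_mul_succ (hγ : 0 < γ) (hr : 0 ≤ r) (k : ℕ) (P : ℝ[X]) :
    ∫ u in Ioi r, (1 - (r / u) ^ γ) ^ (k + 1) *
        ((P - C ((k + 1) * γ)⁻¹ * (derivative (X * P) - X * P)).eval u * Real.exp (-u))
      = ∫ u in Ioi r, (1 - (r / u) ^ γ) ^ k * (P.eval u * Real.exp (-u)) := by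
  -- Integrate `F'` over `(r, ∞)`: `F` vanishes at both ends.
  set c := (k + 1) * γ
  have hc : c ≠ 0 := by positivity
  set D := derivative (X * P) - X * P
  set F : ℝ → ℝ := fun u => (1 - (r / u) ^ γ) ^ (k + 1) * (u * (P.eval u * Real.exp (-u)))
  set f : ℝ[X] → ℕ → ℝ → ℝ := fun Q j u => (1 - (r / u) ^ γ) ^ j * (Q.eval u * Real.exp (-u))
  have hf (Q : ℝ[X]) (j : ℕ) : IntegrableOn (f Q j) (Ioi r) :=
    integrableOn_one_sub_div_rpow_pow_mul hγ.le hr j Q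
  have hderiv (u : ℝ) (hu : u ∈ Ioi r) :
      HasDerivAt F (c * (f P k u - f (P - C c⁻¹ * D) (k + 1) u)) u := by
    have hu0 : 0 < u := hr.trans_lt hu
    refine ((hasDerivAt_one_sub_div_rpow_pow hγ hr hu0 k).fun_mul
      (hasDerivAt_mul_eval_mul_exp_neg P u)).congr_deriv ?_
    simp only [f, D, eval_sub, eval_mul, eval_C]
    field_simp
    ring
  have hparts := integral_Ioi_of_hasDerivAt_of_tendsto
    (continuousAt_one_sub_div_rpow_pow_mul hγ hr (k + 1) P).continuousWithinAt hderiv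
    (((hf _ _).sub (hf _ _)).const_mul c) (tendsto_one_sub_div_rpow_pow_mul hγ r (k + 1) P)
  have hFr : F r = 0 := by
    rcases hr.eq_or_lt with rfl | hr
    · simp [F]
    · simp [F, div_self hr.ne']
  rw [integral_const_mul, integral_sub (hf _ _) (hf _ _)] at hparts
  have hzero : 0 - F r = 0 := by rw [hFr, sub_zero]
  exact (sub_eq_zero.1 ((mul_eq_zero.1 (hparts.trans hzero)).resolve_left hc)).symm

theorem exists_polynomial_integral_eq_exp_neg (hγ : 0 < γ) (k : ℕ) :
    ∃ P : ℝ[X], ∀ r ≥ 0,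
      ∫ u in Ioi r, (1 - (r / u) ^ γ) ^ k * (P.eval u * Real.exp (-u)) = Real.exp (-r) := by
  induction k with
  | zero => exact ⟨1, fun r _ => by simpa using integral_exp_neg_Ioi r⟩
  | succ k ih =>
    obtain ⟨P, hP⟩ := ih
    exact ⟨_, fun r hr => (integral_one_sub_div_rpow_pow_mul_succ hγ hr k P).trans (hP r hr)⟩

end ExponentialMixture

section Superposition

variable {E F S : Type*} [NormedAddCommGroup E] [InnerProductSpace ℝ E] [FiniteDimensional ℝ E]
  [MeasurableSpace E] [BorelSpace E] [NormedAddCommGroup F] [NormedSpace ℂ F] [MeasurableSpace S]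
  {μ : Measure S} {f : E → F} {w : S → ℂ} {c : S → ℝ}

theorem stronglyMeasurable_uncurry_smul_comp_smul (hf : StronglyMeasurable f)
    (hw : Measurable w) (hc : Measurable c) :
    StronglyMeasurable (Function.uncurry fun s ξ => w s • f (c s • ξ)) :=
  (hw.comp measurable_fst).stronglyMeasurable.smul
    (hf.comp_measurable ((hc.comp measurable_fst).smul measurable_snd))

theorem integrable_uncurry_smul_comp_smul (hf : StronglyMeasurable f) (hfi : Integrable f)
    (hw : Measurable w) (hc : Measurable c) (hc0 : ∀ᵐ s ∂μ, c s ≠ 0)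
    (hwc : Integrable (fun s => |(c s ^ Module.finrank ℝ E)⁻¹| * ‖w s‖) μ) :
    Integrable (Function.uncurry fun s ξ => w s • f (c s • ξ)) (μ.prod volume) := by
  refine (integrable_prod_iff
    (stronglyMeasurable_uncurry_smul_comp_smul hf hw hc).aestronglyMeasurable).2 ⟨?_, ?_⟩
  · filter_upwards [hc0] with s hs
    exact (hfi.comp_smul hs).smul (w s)
  · refine (hwc.mul_const (∫ ξ, ‖f ξ‖)).congr (.of_forall fun s => ?_)
    simp only [Function.uncurry_apply_pair, norm_smul, integral_const_mul]
    rw [Measure.integral_comp_smul volume (‖f ·‖), smul_eq_mul, mul_left_comm, mul_assoc]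

theorem lintegral_enorm_fourierInv_superposition_le [SFinite μ] (hf : StronglyMeasurable f)
    (hfi : Integrable f) (hw : Measurable w) (hc : Measurable c) (hc0 : ∀ᵐ s ∂μ, c s ≠ 0)
    (hwc : Integrable (fun s => |(c s ^ Module.finrank ℝ E)⁻¹| * ‖w s‖) μ) :
    ∫⁻ x, ‖𝓕⁻ (fun ξ => ∫ s, w s • f (c s • ξ) ∂μ) x‖ₑ
      ≤ (∫⁻ s, ‖w s‖ₑ ∂μ) * ∫⁻ x, ‖𝓕⁻ f x‖ₑ := by
  refine (lintegral_enorm_fourierInv_integral_le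
    (stronglyMeasurable_uncurry_smul_comp_smul hf hw hc)
    (integrable_uncurry_smul_comp_smul hf hfi hw hc hc0 hwc)).trans_eq ?_
  rw [← lintegral_mul_const _ hw.enorm]
  refine lintegral_congr_ae ?_
  filter_upwards [hc0] with s hs
  have hsmul (x : E) :
      𝓕⁻ (fun ξ => w s • f (c s • ξ)) x = w s • 𝓕⁻ (fun ξ => f (c s • ξ)) x := by
    simp only [Real.fourierInv_eq', smul_comm _ (w s), integral_smul]
  simp only [hsmul, enorm_smul]
  rw [lintegral_const_mul' _ _ enorm_ne_top, lintegral_enorm_fourierInv_comp_smul f hs]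

end Superposition

section HeatKernel

open Polynomial

variable {α : ℝ}

theorem bochnerRiesz_rpow_smul {E : Type*} [NormedAddCommGroup E] [NormedSpace ℝ E]
    (hα : α ≠ 0) (k : ℕ) {u : ℝ} (hu : 0 < u) (ξ : E) :
    bochnerRiesz E k (u ^ (-(2 * α)⁻¹) • ξ)
      = ((max 0 (1 - (‖ξ‖ ^ (2 * α) / u) ^ α⁻¹) ^ k : ℝ) : ℂ) := by
  have hnorm : ‖u ^ (-(2 * α)⁻¹) • ξ‖ ^ 2 = (‖ξ‖ ^ (2 * α) / u) ^ α⁻¹ := by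
    rw [norm_smul, Real.norm_of_nonneg (by positivity), mul_pow, ← Real.rpow_mul_natCast hu.le,
      Real.div_rpow (by positivity) hu.le, ← Real.rpow_mul (norm_nonneg ξ),
      div_eq_inv_mul, ← Real.rpow_neg hu.le, mul_inv_cancel_right₀ hα, Real.rpow_two]
    congr 2
    push_cast
    field_simp
  rw [bochnerRiesz, hnorm]

theorem max_zero_one_sub_div_rpow_eq_zero {γ r u : ℝ} (hγ : 0 ≤ γ) (hu : 0 < u) (hur : u ≤ r) :
    max 0 (1 - (r / u) ^ γ) = 0 :=
  max_eq_left (sub_nonpos.2 (Real.one_le_rpow ((one_le_div hu).2 hur) hγ))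

theorem exists_polynomial_integral_bochnerRiesz_eq (E : Type*) [NormedAddCommGroup E]
    [NormedSpace ℝ E] (hα : 0 < α) {k : ℕ} (hk : k ≠ 0) :
    ∃ P : ℝ[X], ∀ ξ : E,
      ∫ u in Ioi (0 : ℝ),
          ((P.eval u * Real.exp (-u) : ℝ) : ℂ) • bochnerRiesz E k (u ^ (-(2 * α)⁻¹) • ξ)
        = Real.exp (-‖ξ‖ ^ (2 * α)) := by
  obtain ⟨P, hP⟩ := exists_polynomial_integral_eq_exp_neg (inv_pos.2 hα) k
  refine ⟨P, fun ξ => ?_⟩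
  set r := ‖ξ‖ ^ (2 * α)
  have hr : 0 ≤ r := by positivity
  set g : ℝ → ℝ := fun u => max 0 (1 - (r / u) ^ α⁻¹) ^ k * (P.eval u * Real.exp (-u))
  have hg : ∫ u in Ioi (0 : ℝ), g u = Real.exp (-r) := by
    rw [← hP r hr, setIntegral_eq_of_subset_of_forall_sdiff_eq_zero (s := Ioi r)
      measurableSet_Ioi (Ioi_subset_Ioi hr) fun u ⟨hu, hur⟩ => ?_]
    · refine setIntegral_congr_fun measurableSet_Ioi fun u hu => ?_
      simp only [g, max_eq_right (sub_nonneg.2 (div_rpow_mem_Icc (inv_nonneg.2 hα.le) hr hu).2)]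
    · simp only [g, zero_pow hk, zero_mul,
        max_zero_one_sub_div_rpow_eq_zero (inv_nonneg.2 hα.le) hu (not_lt.1 hur)]
  rw [← hg, ← integral_complex_ofReal]
  refine setIntegral_congr_fun measurableSet_Ioi fun u (hu : 0 < u) => ?_
  rw [bochnerRiesz_rpow_smul hα.ne' k hu ξ, smul_eq_mul, ← Complex.ofReal_mul, mul_comm]

variable (E : Type*) [NormedAddCommGroup E] [InnerProductSpace ℝ E] [FiniteDimensional ℝ E]
  [MeasurableSpace E] [BorelSpace E]

theorem lintegral_enorm_fourierInv_exp_neg_norm_rpow_lt_top (hα : 0 < α) :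
    ∫⁻ x : E, ‖𝓕⁻ (fun ξ : E => (Real.exp (-‖ξ‖ ^ (2 * α)) : ℂ)) x‖ₑ < ⊤ := by
  set N := (volume : Measure E).integrablePower
  obtain ⟨P, hP⟩ := exists_polynomial_integral_bochnerRiesz_eq E hα N.succ_ne_zero
  have hsmooth : ContDiff ℝ N (bochnerRiesz E (N + 1)) := contDiff_bochnerRiesz N
  have hsupp := hasCompactSupport_bochnerRiesz (E := E) N.succ_ne_zero
  set w : ℝ → ℂ := fun u => ((P.eval u * Real.exp (-u) : ℝ) : ℂ)
  have hw : Measurable w := by fun_prop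
  have hwint : IntegrableOn w (Ioi 0) := (integrableOn_eval_mul_exp_neg P).ofReal
  have hwc : IntegrableOn
      (fun u => |((u ^ (-(2 * α)⁻¹)) ^ Module.finrank ℝ E)⁻¹| * ‖w u‖) (Ioi 0) := by
    refine IntegrableOn.congr_fun (integrableOn_rpow_mul_eval_mul_exp_neg
      (a := (2 * α)⁻¹ * Module.finrank ℝ E) (by positivity) P).norm
      (fun u (hu : 0 < u) => ?_) measurableSet_Ioi
    rw [Complex.norm_real, norm_mul, Real.norm_eq_abs, ← Real.rpow_mul_natCast hu.le,
      ← Real.rpow_neg hu.le, neg_mul, neg_neg]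
  simp only [← hP]
  refine (lintegral_enorm_fourierInv_superposition_le hsmooth.continuous.stronglyMeasurable
    (hsmooth.continuous.integrable_of_hasCompactSupport hsupp) hw (by fun_prop) ?_ hwc).trans_lt
    (ENNReal.mul_lt_top hwint.2 (integrable_fourierInv_of_contDiff hsmooth hsupp).2)
  filter_upwards [ae_restrict_mem measurableSet_Ioi] with u hu
  exact (Real.rpow_pos_of_pos hu _).ne'

theorem lintegral_enorm_fourierInv_exp_neg_mul_norm_rpow (hα : α ≠ 0) {t : ℝ} (ht : 0 < t) :
    ∫⁻ x : E, ‖𝓕⁻ (fun ξ : E => (Real.exp (-t * ‖ξ‖ ^ (2 * α)) : ℂ)) x‖ₑ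
      = ∫⁻ x : E, ‖𝓕⁻ (fun ξ : E => (Real.exp (-‖ξ‖ ^ (2 * α)) : ℂ)) x‖ₑ := by
  have hc : 0 < t ^ (2 * α)⁻¹ := Real.rpow_pos_of_pos ht _
  rw [← lintegral_enorm_fourierInv_comp_smul
    (fun ξ : E => (Real.exp (-‖ξ‖ ^ (2 * α)) : ℂ)) hc.ne']
  congr! 7 with x ξ
  rw [norm_smul, Real.norm_of_nonneg hc.le, Real.mul_rpow hc.le (norm_nonneg ξ),
    Real.rpow_inv_rpow ht.le (mul_ne_zero two_ne_zero hα), neg_mul]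

theorem exists_forall_lintegral_enorm_gKer_le (n : ℕ) (hα : 0 < α) :
    ∃ K ≠ ⊤, ∀ t > 0, ∫⁻ x, ‖gKer n α t x‖ₑ ≤ K := by
  refine ⟨_, (lintegral_enorm_fourierInv_exp_neg_norm_rpow_lt_top (Rn n) hα).ne, fun t ht => ?_⟩
  rw [← lintegral_enorm_fourierInv_exp_neg_mul_norm_rpow (Rn n) hα.ne' ht]
  refine lintegral_mono fun x => enorm_le_iff_norm_le.2 ?_
  exact Complex.abs_re_le_norm _

theorem measurable_gKer (n : ℕ) (α t : ℝ) : Measurable (gKer n α t) := by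
  have hsymbol : Measurable fun ξ : Rn n => (Real.exp (-t * ‖ξ‖ ^ (2 * α)) : ℂ) := by fun_prop
  exact Complex.measurable_re.comp
    (stronglyMeasurable_fourierInv hsymbol.stronglyMeasurable).measurable

end HeatKernel

section Young

theorem lintegral_mul_rpow_le_rpow_mul_lintegral {Ω : Type*} [MeasurableSpace Ω] {μ : Measure Ω}
    {q : ℝ} (hq : 1 ≤ q) {w f : Ω → ℝ≥0∞} (hw : AEMeasurable w μ) (hf : AEMeasurable f μ) :
    (∫⁻ y, w y * f y ∂μ) ^ q ≤ (∫⁻ y, w y ∂μ) ^ (q - 1) * ∫⁻ y, w y * f y ^ q ∂μ := by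
  have hq0 : 0 < q := one_pos.trans_le hq
  have hexp : 0 ≤ 1 - q⁻¹ := sub_nonneg.2 (inv_le_one_of_one_le₀ hq)
  have hsplit (y : Ω) : w y ^ (1 - q⁻¹) * (w y * f y ^ q) ^ q⁻¹ = w y * f y := by
    rw [ENNReal.mul_rpow_of_nonneg _ _ (inv_nonneg.2 hq0.le), ENNReal.rpow_rpow_inv hq0.ne',
      ← mul_assoc, ← ENNReal.rpow_add_of_nonneg _ _ hexp (inv_nonneg.2 hq0.le), sub_add_cancel,
      ENNReal.rpow_one]
  calc (∫⁻ y, w y * f y ∂μ) ^ q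
      ≤ ((∫⁻ y, w y ∂μ) ^ (1 - q⁻¹) * (∫⁻ y, w y * f y ^ q ∂μ) ^ q⁻¹) ^ q := by
        simp_rw [← hsplit]
        gcongr
        exact ENNReal.lintegral_mul_norm_pow_le hw (hw.mul (hf.pow_const q)) hexp
          (inv_nonneg.2 hq0.le) (sub_add_cancel _ _)
    _ = (∫⁻ y, w y ∂μ) ^ (q - 1) * ∫⁻ y, w y * f y ^ q ∂μ := by
        rw [ENNReal.mul_rpow_of_nonneg _ _ hq0.le, ← ENNReal.rpow_mul,
          ENNReal.rpow_inv_rpow hq0.ne', sub_mul, one_mul, inv_mul_cancel₀ hq0.ne']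

theorem lintegral_lconvolution_rpow_le {G : Type*} [AddGroup G] [MeasurableSpace G]
    [MeasurableAdd₂ G] [MeasurableNeg G] {μ : Measure G} [μ.IsAddLeftInvariant] [SFinite μ]
    {q : ℝ} (hq : 1 ≤ q) {g f : G → ℝ≥0∞} (hg : Measurable g) (hf : Measurable f) :
    ∫⁻ x, (g ⋆ₗ[μ] f) x ^ q ∂μ ≤ (∫⁻ y, g y ∂μ) ^ q * ∫⁻ x, f x ^ q ∂μ := by
  set I := ∫⁻ y, g y ∂μ
  calc ∫⁻ x, (g ⋆ₗ[μ] f) x ^ q ∂μ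
      ≤ ∫⁻ x, I ^ (q - 1) * ∫⁻ y, g y * f (-y + x) ^ q ∂μ ∂μ := lintegral_mono fun x =>
        lintegral_mul_rpow_le_rpow_mul_lintegral hq hg.aemeasurable (by fun_prop)
    _ = I ^ (q - 1) * ∫⁻ y, ∫⁻ x, g y * f (-y + x) ^ q ∂μ ∂μ := by
        rw [lintegral_const_mul _ (Measurable.lintegral_prod_right (by fun_prop)),
          lintegral_lintegral_swap (by fun_prop)]
    _ = I ^ (q - 1) * (I * ∫⁻ x, f x ^ q ∂μ) := by
        rw [← lintegral_mul_const _ hg]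
        congr! 3 with y
        rw [lintegral_const_mul _ (by fun_prop),
          lintegral_add_left_eq_self (fun x => f x ^ q) (-y)]
    _ = I ^ q * ∫⁻ x, f x ^ q ∂μ := by
        rw [← mul_assoc]
        nth_rw 2 [← ENNReal.rpow_one I]
        rw [← ENNReal.rpow_add_of_nonneg _ _ (sub_nonneg.2 hq) zero_le_one, sub_add_cancel]

theorem enorm_conv_le_lconvolution (n : ℕ) (g f : Rn n → ℝ) (x : Rn n) :
    ‖conv n g f x‖ₑ ≤ ((‖g ·‖ₑ) ⋆ₗ (‖f ·‖ₑ)) x := by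
  calc ‖conv n g f x‖ₑ = ‖∫ y, g y * f (-y + x)‖ₑ := by
        rw [conv, ← integral_sub_left_eq_self _ volume x]
        simp only [sub_sub_cancel, neg_add_eq_sub]
    _ ≤ ∫⁻ y, ‖g y * f (-y + x)‖ₑ := enorm_integral_le_lintegral_enorm _
    _ = ((‖g ·‖ₑ) ⋆ₗ (‖f ·‖ₑ)) x := lintegral_congr fun y => enorm_mul _ _

theorem eLpNorm_conv_le (n : ℕ) {q : ℝ} (hq : 1 ≤ q) {g f : Rn n → ℝ} (hg : Measurable g)
    (hf : Measurable f) :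
    eLpNorm (conv n g f) (ENNReal.ofReal q) volume
      ≤ (∫⁻ x, ‖g x‖ₑ) * eLpNorm f (ENNReal.ofReal q) volume := by
  have hq0 : 0 < q := one_pos.trans_le hq
  simp only [eLpNorm_eq_lintegral_rpow_enorm_toReal (ENNReal.ofReal_pos.2 hq0).ne'
    ENNReal.ofReal_ne_top, ENNReal.toReal_ofReal hq0.le]
  calc (∫⁻ x, ‖conv n g f x‖ₑ ^ q) ^ (1 / q)
      ≤ (∫⁻ x, ((‖g ·‖ₑ) ⋆ₗ (‖f ·‖ₑ)) x ^ q) ^ (1 / q) := by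
        gcongr with x
        exact enorm_conv_le_lconvolution n g f x
    _ ≤ ((∫⁻ x, ‖g x‖ₑ) ^ q * ∫⁻ x, ‖f x‖ₑ ^ q) ^ (1 / q) := by
        gcongr
        exact lintegral_lconvolution_rpow_le hq hg.enorm hf.enorm
    _ = (∫⁻ x, ‖g x‖ₑ) * (∫⁻ x, ‖f x‖ₑ ^ q) ^ (1 / q) := by
        rw [ENNReal.mul_rpow_of_nonneg _ _ (by positivity), one_div, ENNReal.rpow_rpow_inv hq0.ne']

end Young

section LuxemburgNorm

variable {Ω : Type*} [MeasurableSpace Ω] {μ : Measure Ω}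

theorem le_mul_luxNorm {p : Ω → ℝ} {f : Ω → ℝ≥0∞} {a K : ℝ≥0∞} (hK0 : K ≠ 0) (hK : K ≠ ⊤)
    (h : ∀ lam : ℝ≥0∞, lam ≠ 0 → lam ≠ ⊤ → ∫⁻ x, (f x / lam) ^ p x ∂μ ≤ 1 → a ≤ K * lam) :
    a ≤ K * luxNorm μ p f := by
  rw [← ENNReal.div_le_iff' hK0 hK]
  refine le_sInf fun lam ⟨hlam0, hlam⟩ => ?_
  rw [ENNReal.div_le_iff' hK0 hK]
  rcases eq_or_ne lam ⊤ with rfl | hlamtop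
  · simp [hK0]
  · exact h lam hlam0.ne' hlamtop hlam

theorem rpow_le_rpow_sub_one_mul_rpow_add {q p : ℝ} (hq : 0 < q) (hqp : q ≤ p) (v : ℝ≥0∞)
    {w : ℝ≥0∞} (hw : w ≠ ⊤) : v ^ q ≤ w ^ (q / p - 1) * (v ^ p + w) := by
  have hp : 0 < p := hq.trans_le hqp
  have hexp : 0 ≤ 1 - q / p := sub_nonneg.2 ((div_le_one hp).2 hqp)
  have hinv (z : ℝ≥0∞) : z ^ (q / p - 1) = (z ^ (1 - q / p))⁻¹ := by
    rw [← ENNReal.rpow_neg, neg_sub]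
  have hfactor : w ^ (q / p - 1) ≠ 0 := by
    rw [hinv]
    exact ENNReal.inv_ne_zero.2 (ENNReal.rpow_ne_top_of_nonneg hexp hw)
  rcases eq_or_ne (v ^ p + w) 0 with h0 | h0
  · have hv : v = 0 := (ENNReal.rpow_eq_zero_iff_of_pos hp).1 (add_eq_zero.1 h0).1
    simp [hv, hq]
  rcases eq_or_ne (v ^ p + w) ⊤ with htop | htop
  · simp [htop, hfactor]
  calc v ^ q = (v ^ p) ^ (q / p) := by rw [← ENNReal.rpow_mul, mul_div_cancel₀ _ hp.ne']
    _ ≤ (v ^ p + w) ^ (q / p - 1 + 1) := by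
        rw [sub_add_cancel]
        gcongr
        exact le_self_add
    _ = (v ^ p + w) ^ (q / p - 1) * (v ^ p + w) := by
        rw [ENNReal.rpow_add _ _ h0 htop, ENNReal.rpow_one]
    _ ≤ w ^ (q / p - 1) * (v ^ p + w) := by
        rw [hinv, hinv]
        gcongr
        exact le_add_self

variable {q A : ℝ} {p w : Ω → ℝ}

theorem lintegral_rpow_le_of_lintegral_rpow_le_one (hq : 0 < q) (hqp : ∀ᵐ x ∂μ, q ≤ p x)
    (hw : AEMeasurable w μ) (hw0 : ∀ x, 0 < w x) (hA : ∀ᵐ x ∂μ, w x ^ (q / p x - 1) ≤ A)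
    {f : Ω → ℝ≥0∞} (hf : ∫⁻ x, f x ^ p x ∂μ ≤ 1) :
    ∫⁻ x, f x ^ q ∂μ ≤ ENNReal.ofReal A * (1 + ∫⁻ x, ENNReal.ofReal (w x) ∂μ) := by
  calc ∫⁻ x, f x ^ q ∂μ
      ≤ ∫⁻ x, ENNReal.ofReal A * (f x ^ p x + ENNReal.ofReal (w x)) ∂μ := by
        refine lintegral_mono_ae ?_
        filter_upwards [hqp, hA] with x hqp hA
        calc f x ^ q ≤ ENNReal.ofReal (w x) ^ (q / p x - 1) * (f x ^ p x + ENNReal.ofReal (w x)) :=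
              rpow_le_rpow_sub_one_mul_rpow_add hq hqp _ ENNReal.ofReal_ne_top
          _ ≤ ENNReal.ofReal A * (f x ^ p x + ENNReal.ofReal (w x)) := by
              rw [ENNReal.ofReal_rpow_of_pos (hw0 x)]
              gcongr
    _ = ENNReal.ofReal A * (∫⁻ x, f x ^ p x ∂μ + ∫⁻ x, ENNReal.ofReal (w x) ∂μ) := by
        rw [lintegral_const_mul' _ _ ENNReal.ofReal_ne_top,
          lintegral_add_right' _ hw.ennreal_ofReal]
    _ ≤ ENNReal.ofReal A * (1 + ∫⁻ x, ENNReal.ofReal (w x) ∂μ) := by gcongr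

theorem eLpNorm_le_mul_luxNorm (hq : 0 < q) (hqp : ∀ᵐ x ∂μ, q ≤ p x)
    (hw : Integrable w μ) (hw0 : ∀ x, 0 < w x) (hA0 : 0 < A)
    (hA : ∀ᵐ x ∂μ, w x ^ (q / p x - 1) ≤ A) (f : Ω → ℝ≥0∞) :
    eLpNorm f (ENNReal.ofReal q) μ
      ≤ (ENNReal.ofReal A * (1 + ∫⁻ x, ENNReal.ofReal (w x) ∂μ)) ^ (1 / q) * luxNorm μ p f := by
  have hwtop : ∫⁻ x, ENNReal.ofReal (w x) ∂μ ≠ ⊤ := hw.lintegral_lt_top.ne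
  refine le_mul_luxNorm ?_ ?_ fun lam hlam0 hlam hmod => ?_
  · simp [hA0, hq.le]
  · exact ENNReal.rpow_ne_top_of_nonneg (by positivity)
      (ENNReal.mul_ne_top ENNReal.ofReal_ne_top (ENNReal.add_ne_top.2 ⟨ENNReal.one_ne_top, hwtop⟩))
  have hscale : ∫⁻ x, f x ^ q ∂μ = (∫⁻ x, (f x / lam) ^ q ∂μ) * lam ^ q := by
    rw [← lintegral_mul_const' _ _ (ENNReal.rpow_ne_top_of_nonneg hq.le hlam)]
    refine lintegral_congr fun x => ?_
    rw [← ENNReal.mul_rpow_of_nonneg _ _ hq.le, ENNReal.div_mul_cancel hlam0 hlam]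
  rw [eLpNorm_eq_lintegral_rpow_enorm_toReal (ENNReal.ofReal_pos.2 hq).ne' ENNReal.ofReal_ne_top,
    ENNReal.toReal_ofReal hq.le]
  calc (∫⁻ x, f x ^ q ∂μ) ^ (1 / q)
      = (∫⁻ x, (f x / lam) ^ q ∂μ) ^ (1 / q) * lam := by
        rw [hscale, ENNReal.mul_rpow_of_nonneg _ _ (by positivity), one_div,
          ENNReal.rpow_rpow_inv hq.ne']
    _ ≤ _ := by
        gcongr
        exact lintegral_rpow_le_of_lintegral_rpow_le_one hq hqp hw.aemeasurable hw0 hA hmod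

theorem le_max_rpow_rpow {T a b p : ℝ} (hT : 0 ≤ T) (ha : 0 < a) (hap : a ≤ p) (hpb : p ≤ b) :
    T ≤ max (T ^ (1 / a)) (T ^ (1 / b)) ^ p := by
  have hp : 0 < p := ha.trans_le hap
  have hb : 0 < b := hp.trans_le hpb
  have hroot (c : ℝ) (hc : T ≤ T ^ (1 / c * p))
      (hmax : T ^ (1 / c) ≤ max (T ^ (1 / a)) (T ^ (1 / b))) :
      T ≤ max (T ^ (1 / a)) (T ^ (1 / b)) ^ p := by
    rw [Real.rpow_mul hT] at hc
    exact hc.trans (by gcongr)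
  rcases le_total 1 T with h | h
  · refine hroot a (Real.self_le_rpow_of_one_le h ?_) (le_max_left _ _)
    rwa [one_div_mul_eq_div, one_le_div ha]
  · refine hroot b (Real.self_le_rpow_of_le_one hT h ?_) (le_max_right _ _)
    rwa [one_div_mul_eq_div, div_le_one hb]

theorem luxNorm_le_of_ae_le {a b : ℝ} (ha : 0 < a) (hap : ∀ᵐ x ∂μ, a ≤ p x)
    (hpb : ∀ᵐ x ∂μ, p x ≤ b) {T : ℝ} (hT : 0 < T) (hμ : μ univ ≤ ENNReal.ofReal T)
    {f : Ω → ℝ≥0∞} {B : ℝ≥0∞} (hf : ∀ᵐ x ∂μ, f x ≤ B) :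
    luxNorm μ p f ≤ ENNReal.ofReal (max (T ^ (1 / a)) (T ^ (1 / b))) * B := by
  set m := max (T ^ (1 / a)) (T ^ (1 / b))
  have hm : 0 < m := lt_max_of_lt_left (by positivity)
  refine le_of_forall_gt_imp_ge_of_dense fun lam hlam => sInf_le ⟨pos_of_gt hlam, ?_⟩
  have hB : B / lam ≤ (ENNReal.ofReal m)⁻¹ := by
    refine ENNReal.div_le_of_le_mul ?_
    rw [mul_comm, ← div_eq_mul_inv,
      ENNReal.le_div_iff_mul_le (.inl (ENNReal.ofReal_pos.2 hm).ne') (.inl ENNReal.ofReal_ne_top),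
      mul_comm]
    exact hlam.le
  calc ∫⁻ x, (f x / lam) ^ p x ∂μ ≤ ∫⁻ _, (ENNReal.ofReal T)⁻¹ ∂μ := by
        refine lintegral_mono_ae ?_
        filter_upwards [hap, hpb, hf] with x hap hpb hf
        have hp : 0 ≤ p x := ha.le.trans hap
        calc (f x / lam) ^ p x ≤ (ENNReal.ofReal m)⁻¹ ^ p x := by
              gcongr
              exact (ENNReal.div_le_div_right hf lam).trans hB
          _ = (ENNReal.ofReal (m ^ p x))⁻¹ := by
              rw [ENNReal.inv_rpow, ENNReal.ofReal_rpow_of_pos hm]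
          _ ≤ (ENNReal.ofReal T)⁻¹ := by
              gcongr
              exact le_max_rpow_rpow hT.le ha hap hpb
    _ ≤ (ENNReal.ofReal T)⁻¹ * ENNReal.ofReal T := by
        rw [lintegral_const]
        gcongr
    _ ≤ 1 := ENNReal.inv_mul_le_one _

end LuxemburgNorm

section LogDecay

theorem rpow_neg_rpow_le_exp {q p C r s : ℝ} (hq : 0 < q) (hr : 0 ≤ r) (hs : 1 < s)
    (h : 1 / q - 1 / p ≤ C / Real.log s) : (s ^ (-r)) ^ (q / p - 1) ≤ Real.exp (r * q * C) := by
  have hs0 : 0 < s := one_pos.trans hs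
  have hlog : (1 / q - 1 / p) * Real.log s ≤ C := (le_div_iff₀ (Real.log_pos hs)).1 h
  rw [← Real.rpow_mul hs0.le, Real.rpow_def_of_pos hs0, Real.exp_le_exp]
  calc Real.log s * (-r * (q / p - 1)) = r * q * ((1 / q - 1 / p) * Real.log s) := by
        field_simp
        ring
    _ ≤ r * q * C := by gcongr

theorem exists_forall_eLpNorm_le_mul_luxNorm {E : Type*} [NormedAddCommGroup E] [NormedSpace ℝ E]
    [FiniteDimensional ℝ E] [MeasurableSpace E] [BorelSpace E] (μ : Measure E) [μ.IsAddHaarMeasure]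
    {q C : ℝ} (hq : 0 < q) {p : E → ℝ} (hqp : ∀ᵐ x ∂μ, q ≤ p x)
    (hdecay : ∀ᵐ x ∂μ, 1 / q - 1 / p x ≤ C / Real.log (Real.exp 1 + ‖x‖)) :
    ∃ K ≠ ⊤, ∀ f : E → ℝ≥0∞, eLpNorm f (ENNReal.ofReal q) μ ≤ K * luxNorm μ p f := by
  set r : ℝ := Module.finrank ℝ E + 1
  set w : E → ℝ := fun x => (Real.exp 1 + ‖x‖) ^ (-r)
  have he : 1 < Real.exp 1 := Real.one_lt_exp_iff.2 one_pos
  have hw0 (x : E) : 0 < w x := by positivity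
  have hw : Integrable w μ := by
    refine (integrable_one_add_norm (lt_add_one _)).mono' (by fun_prop) (.of_forall fun x => ?_)
    rw [Real.norm_of_nonneg (hw0 x).le]
    exact Real.rpow_le_rpow_of_nonpos (by positivity) (by gcongr) (by simp only [r]; linarith)
  refine ⟨_, ?_, eLpNorm_le_mul_luxNorm hq hqp hw hw0 (Real.exp_pos (r * q * C)) ?_⟩
  · exact ENNReal.rpow_ne_top_of_nonneg (by positivity) (ENNReal.mul_ne_top ENNReal.ofReal_ne_top
      (ENNReal.add_ne_top.2 ⟨ENNReal.one_ne_top, hw.lintegral_lt_top.ne⟩))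
  · filter_upwards [hdecay] with x hx
    exact rpow_neg_rpow_le_exp hq (by positivity) (he.trans_le (by simp)) hx

variable {n : ℕ} {q : ℝ} {qb : Rn n → ℝ}

theorem IsPembq.ae_le (h : IsPembq n q qb) : ∀ᵐ x, q ≤ qb x := by
  obtain ⟨⟨-, h1, -⟩, hinf, -⟩ := h
  filter_upwards [ae_essInf_le ⟨1, Filter.eventually_map.2 (.of_forall fun x => h1 x (mem_univ x))⟩]
    with x hx using hinf.trans hx

theorem IsPembq.tendsto_one_div (h : IsPembq n q qb) :
    Filter.Tendsto (fun x => 1 / qb x) (Filter.cocompact (Rn n)) (nhds (1 / q)) := by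
  obtain ⟨-, -, -, hs⟩ := h
  have hlim := hs.inv_tendsto_atTop.const_sub (1 / q)
  rw [sub_zero] at hlim
  refine hlim.congr' ?_
  filter_upwards [hs.eventually_gt_atTop 0] with x hx
  have hnum : q * qb x ≠ 0 := (div_ne_zero_iff.1 hx.ne').1
  have hq : q ≠ 0 := left_ne_zero_of_mul hnum
  have hqb : qb x ≠ 0 := right_ne_zero_of_mul hnum
  rw [Pi.inv_apply, inv_div]
  field_simp
  ring

theorem IsPLog.exists_tendsto_one_div {E : Type*} [NormedAddCommGroup E] [ProperSpace E]
    [MeasurableSpace E] {p : E → ℝ} (h : IsPLog univ p) :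
    ∃ C pinf : ℝ, Filter.Tendsto (fun x => 1 / p x) (Filter.cocompact E) (nhds (1 / pinf)) ∧
      ∀ x, |1 / p x - 1 / pinf| ≤ C / Real.log (Real.exp 1 + ‖x‖) := by
  obtain ⟨-, -, -, -, C, -, pinf, -, hdecay⟩ := h
  refine ⟨C, pinf, ?_, fun x => hdecay x (mem_univ x)⟩
  rw [tendsto_iff_norm_sub_tendsto_zero]
  refine squeeze_zero (fun _ => norm_nonneg _) (fun x => hdecay x (mem_univ x)) ?_
  exact (Real.tendsto_log_atTop.comp (Filter.tendsto_atTop_add_const_left _ _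
    (tendsto_norm_cocompact_atTop (E := E)))).const_div_atTop C

theorem IsPembq.exists_log_decay (h : IsPembq n q qb) (hn : n ≠ 0) :
    ∃ C : ℝ, ∀ x, 1 / q - 1 / qb x ≤ C / Real.log (Real.exp 1 + ‖x‖) := by
  have : NeZero n := ⟨hn⟩
  obtain ⟨C, pinf, hlim, hdecay⟩ := h.1.exists_tendsto_one_div
  refine ⟨C, fun x => ?_⟩
  rw [tendsto_nhds_unique h.tendsto_one_div hlim]
  exact (le_abs_self _).trans ((abs_sub_comm _ _).trans_le (hdecay x))

end LogDecay

theorem exists_forall_eLpNorm_conv_gKer_le (n : ℕ) {α q C : ℝ} (hα : 0 < α) (hq : 1 ≤ q)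
    {qb : Rn n → ℝ} (hqb : ∀ᵐ x, q ≤ qb x)
    (hdecay : ∀ᵐ x, 1 / q - 1 / qb x ≤ C / Real.log (Real.exp 1 + ‖x‖)) :
    ∃ K > (0 : ℝ), ∀ t > 0, ∀ u₀ : Rn n → ℝ, Measurable u₀ →
      eLpNorm (conv n (gKer n α t) u₀) (ENNReal.ofReal q) volume
        ≤ ENNReal.ofReal K * luxNormR volume qb u₀ := by
  obtain ⟨K₁, hK₁, hker⟩ := exists_forall_lintegral_enorm_gKer_le n hα
  obtain ⟨K₂, hK₂, hemb⟩ :=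
    exists_forall_eLpNorm_le_mul_luxNorm volume (one_pos.trans_le hq) hqb hdecay
  have hK : K₁ * K₂ ≤ ENNReal.ofReal ((K₁ * K₂).toReal + 1) :=
    (ENNReal.ofReal_toReal (ENNReal.mul_ne_top hK₁ hK₂)).symm.trans_le (by gcongr; linarith)
  refine ⟨(K₁ * K₂).toReal + 1, by positivity, fun t ht u₀ hu₀ => ?_⟩
  calc eLpNorm (conv n (gKer n α t) u₀) (ENNReal.ofReal q) volume
      ≤ (∫⁻ x, ‖gKer n α t x‖ₑ) * eLpNorm u₀ (ENNReal.ofReal q) volume :=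
        eLpNorm_conv_le n hq (measurable_gKer n α t) hu₀
    _ = (∫⁻ x, ‖gKer n α t x‖ₑ)
          * eLpNorm (fun x => ENNReal.ofReal |u₀ x|) (ENNReal.ofReal q) volume := by
        congr 1
        refine eLpNorm_congr_enorm_ae (.of_forall fun x => ?_)
        rw [enorm_eq_self, ← Real.norm_eq_abs, ofReal_norm]
    _ ≤ K₁ * (K₂ * luxNormR volume qb u₀) := mul_le_mul' (hker t ht) (hemb _)
    _ ≤ ENNReal.ofReal ((K₁ * K₂).toReal + 1) * luxNormR volume qb u₀ := by
        rw [← mul_assoc]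
        gcongr

theorem eNormT_le_of_forall_eLpNorm_le {n : ℕ} {p : ℝ → ℝ} {q a b T : ℝ} (ha : 0 < a)
    (hap : ∀ᵐ t ∂volume.restrict (Ici 0), a ≤ p t) (hpb : ∀ᵐ t ∂volume.restrict (Ici 0), p t ≤ b)
    (hT : 0 < T) {u : ℝ → Rn n → ℝ} {B : ℝ≥0∞}
    (hu : ∀ t > 0, eLpNorm (u t) (ENNReal.ofReal q) volume ≤ B) :
    eNormT n p q T u ≤ ENNReal.ofReal (max (T ^ (1 / a)) (T ^ (1 / b))) * B := by
  have hsub : Ioc 0 T ⊆ Ici 0 := fun t ht => ht.1.le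
  refine luxNorm_le_of_ae_le (μ := volume.restrict (Ioc 0 T)) ha
    (ae_restrict_of_ae_restrict_of_subset hsub hap)
    (ae_restrict_of_ae_restrict_of_subset hsub hpb) hT (by simp) ?_
  filter_upwards [ae_restrict_mem measurableSet_Ioc] with t ht using hu t ht.1

theorem stmt10_general (n : ℕ) {α q a : ℝ} (hα : 0 < α) (hq : 1 ≤ q) {qb : Rn n → ℝ}
    (hqb : ∀ᵐ x, q ≤ qb x)
    (hdecay : ∃ C₀, ∀ᵐ x, 1 / q - 1 / qb x ≤ C₀ / Real.log (Real.exp 1 + ‖x‖))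
    {p : ℝ → ℝ} (ha : 0 < a) (hap : ∀ᵐ t ∂(volume.restrict (Ici (0 : ℝ))), a ≤ p t)
    (hpplus : ∃ M : ℝ, ∀ᵐ t ∂(volume.restrict (Ici (0 : ℝ))), p t ≤ M) :
    ∃ C > (0 : ℝ), ∀ T > (0 : ℝ), ∀ u₀ : Rn n → ℝ, Measurable u₀ →
      eNormT n p q T (fun t x => conv n (gKer n α t) u₀ x)
        ≤ ENNReal.ofReal (C * max (T ^ (1 / essInf p (volume.restrict (Ici (0 : ℝ)))))
            (T ^ (1 / essSup p (volume.restrict (Ici (0 : ℝ))))))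
          * luxNormR volume qb u₀ := by
  obtain ⟨C₀, hC₀⟩ := hdecay
  obtain ⟨M, hM⟩ := hpplus
  obtain ⟨C, hC, hconv⟩ := exists_forall_eLpNorm_conv_gKer_le n hα hq hqb hC₀
  have : (ae (volume.restrict (Ici (0 : ℝ)))).NeBot := ae_neBot.2 (by simp)
  have hinf : 0 < essInf p (volume.restrict (Ici (0 : ℝ))) := ha.trans_le <|
    le_essInf_of_ae_le a hap (Filter.IsBoundedUnder.isCoboundedUnder_ge ⟨M, hM⟩)
  refine ⟨C, hC, fun T hT u₀ hu₀ => ?_⟩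
  rw [mul_comm C, ENNReal.ofReal_mul (by positivity), mul_assoc]
  exact eNormT_le_of_forall_eLpNorm_le hinf (ae_essInf_le ⟨a, hap⟩) (ae_le_essSup ⟨M, hM⟩) hT
    fun t ht => hconv t ht u₀ hu₀

/-- Control of the heat semigroup on the initial data in `E_T`:
`‖𝔤_t^α ∗ u₀‖_{E_T} ≤ C max{T^{1/p⁻}, T^{1/p⁺}} ‖u₀‖_{L^{q̄(·)}}`. -/
theorem stmt10 (n : ℕ) (hn : 1 ≤ n) (α : ℝ) (hα : 0 < α)
    (q : ℝ) (hq : 1 < q) (qb : Rn n → ℝ) (hqb : IsPembq n q qb)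
    (p : ℝ → ℝ) (hpm : Measurable p) (hp1 : ∀ t ∈ Ici (0:ℝ), 1 ≤ p t)
    (hpminus : 1 < essInf p (volume.restrict (Ici (0:ℝ))))
    (hpplus : ∃ M : ℝ, ∀ᵐ t ∂(volume.restrict (Ici (0:ℝ))), p t ≤ M) :
    ∃ C > (0:ℝ), ∀ T > (0:ℝ), ∀ u₀ : Rn n → ℝ, Measurable u₀ →
      luxNormR volume qb u₀ < ⊤ →
      eNormT n p q T (fun t x => conv n (gKer n α t) u₀ x)
        ≤ ENNReal.ofReal (C * max (T ^ (1 / essInf p (volume.restrict (Ici (0:ℝ)))))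
            (T ^ (1 / essSup p (volume.restrict (Ici (0:ℝ))))))
          * luxNormR volume qb u₀ := by
  obtain ⟨C, hC, hbound⟩ := stmt10_general n hα hq.le hqb.ae_le
    ((hqb.exists_log_decay (by omega)).imp fun _ => .of_forall) one_pos
    ((ae_restrict_mem measurableSet_Ici).mono hp1) hpplus
  exact ⟨C, hC, fun T hT u₀ hu₀ _ => hbound T hT u₀ hu₀⟩
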